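/- Let R be a right noetherian, left P-injective ring in which every nonzero complement left ideal is not small. Then R is right artinian. -/

import Mathlib

open MulOpposite in
/-- Right ideals of `R`, as submodules of `R` over `Rᵐᵒᵖ`. -/
abbrev RIdeal (R : Type*) [Ring R] := Submodule Rᵐᵒᵖ R

section Defs
variable (R : Type*) [Ring R]

/-- Left annihilator of a subset. -/
def lAnn (X : Set R) : Set R := {a | ∀ x ∈ X, a * x = 0}

/-- Right annihilator of a subset. -/
def rAnn (X : Set R) : Set R := {a | ∀ x ∈ X, x * a = 0}

/-- Right annihilator of a subset, as a right ideal. -/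
def rAnnI (X : Set R) : RIdeal R where
  carrier := rAnn R X
  add_mem' := by intro a b ha hb x hx; rw [mul_add, ha x hx, hb x hx, add_zero]
  zero_mem' := by intro x hx; rw [mul_zero]
  smul_mem' := by
    intro c a ha x hx
    show x * (a * c.unop) = 0
    rw [← mul_assoc, ha x hx, zero_mul]

/-- `R` is left P-injective: `rl(a) = aR` for every `a`. -/
def IsLeftPInjective : Prop :=
  ∀ a x : R, (∀ u : R, u * a = 0 → u * x = 0) ↔ ∃ s : R, x = a * s

/-- `R` is left 2-injective. -/
def IsLeft2Injective : Prop :=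
  ∀ (a b : R) (f : ↥(Submodule.span R ({a, b} : Set R)) →ₗ[R] R),
    ∃ g : R →ₗ[R] R, ∀ x : ↥(Submodule.span R ({a, b} : Set R)), g (x : R) = f x

/-- `R` is left FP-injective: every matrix ring over `R` is left P-injective. -/
def IsLeftFPInjective : Prop :=
  ∀ n : ℕ, IsLeftPInjective (Matrix (Fin n) (Fin n) R)

/-- A left ideal is small if `K + I = R` implies `K = R`. -/
def IsSmallLeftIdeal (I : Ideal R) : Prop := ∀ K : Ideal R, K ⊔ I = ⊤ → K = ⊤

/-- A complement left ideal: maximal with respect to intersecting some left ideal trivially. -/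
def IsComplementLeftIdeal (C : Ideal R) : Prop :=
  ∃ S : Ideal R, C ⊓ S = ⊥ ∧ ∀ C' : Ideal R, C ≤ C' → C' ⊓ S = ⊥ → C' = C

/-- A right ideal is essential in `R`. -/
def IsEssentialRIdeal (I : RIdeal R) : Prop := ∀ K : RIdeal R, K ⊓ I = ⊥ → K = ⊥

/-- The right socle: the sum of all simple (minimal) right ideals. -/
def rSocle : RIdeal R := sSup {m : RIdeal R | IsSimpleModule Rᵐᵒᵖ m}

/-- The right singular ideal. -/
def rSingular : Set R := {a | IsEssentialRIdeal R (rAnnI R {a})}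

/-- ACC on right annihilators. -/
def ACCOnRightAnnihilators : Prop :=
  ∀ f : ℕ → Set R, (∀ n, ∃ X : Set R, f n = rAnn R X) → (∀ n, f n ⊆ f (n + 1)) →
    ∃ n, ∀ m, n ≤ m → f m = f n

/-- The Jacobson radical, as a set. -/
def jacobsonSet : Set R := (TwoSidedIdeal.jacobson (⊥ : TwoSidedIdeal R) : Set R)

/-- A subset is nilpotent if products of some fixed length of its elements vanish. -/
def IsNilpotentSet (J : Set R) : Prop :=
  ∃ n : ℕ, ∀ f : Fin (n + 1) → R, (∀ i, f i ∈ J) → (List.ofFn f).prod = 0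

/-- `R` is quasi-Frobenius: left noetherian and left self-injective. -/
def IsQuasiFrobenius : Prop := IsNoetherianRing R ∧ Module.Injective R R

/-- `R` is right mininjective. -/
def IsRightMininjective : Prop :=
  ∀ (I : RIdeal R), IsSimpleModule Rᵐᵒᵖ I → ∀ f : I →ₗ[Rᵐᵒᵖ] R,
    ∃ c : R, ∀ x : I, f x = c * (x : R)

/-- `R` is left mininjective. -/
def IsLeftMininjective : Prop :=
  ∀ (I : Ideal R), IsSimpleModule R I → ∀ f : I →ₗ[R] R,
    ∃ c : R, ∀ x : I, f x = (x : R) * c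

/-- `R` is right simple injective. -/
def IsRightSimpleInjective : Prop :=
  ∀ (I : RIdeal R) (f : I →ₗ[Rᵐᵒᵖ] R), IsSimpleModule Rᵐᵒᵖ (LinearMap.range f) →
    ∃ c : R, ∀ x : I, f x = c * (x : R)

/-- `R` is left CS: every left ideal is essential in a direct summand of `R`. -/
def IsLeftCS : Prop :=
  ∀ I : Ideal R, ∃ K : Ideal R, (∃ K' : Ideal R, IsCompl K K') ∧ I ≤ K ∧
    ∀ L : Ideal R, L ≤ K → L ⊓ I = ⊥ → L = ⊥

/-- `R` is left min-CS: every minimal left ideal is essential in a direct summand. -/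
def IsLeftMinCS : Prop :=
  ∀ I : Ideal R, IsSimpleModule R I → ∃ K : Ideal R, (∃ K' : Ideal R, IsCompl K K') ∧ I ≤ K ∧
    ∀ L : Ideal R, L ≤ K → L ⊓ I = ⊥ → L = ⊥

/-- `R` is right Johns: right noetherian and every right ideal is a right annihilator. -/
def IsRightJohns : Prop :=
  IsNoetherianRing Rᵐᵒᵖ ∧ ∀ I : RIdeal R, ∃ X : Set R, (I : Set R) = rAnn R X

end Defs

section MoreDefs
variable (R : Type*) [Ring R]

/-- Left annihilator of a subset, as a left ideal. -/
def lAnnI (X : Set R) : Ideal R where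
  carrier := lAnn R X
  add_mem' := by intro a b ha hb x hx; rw [add_mul, ha x hx, hb x hx, add_zero]
  zero_mem' := by intro x hx; rw [zero_mul]
  smul_mem' := by
    intro c a ha x hx
    show c * a * x = 0
    rw [mul_assoc, ha x hx, mul_zero]

/-- A left ideal is essential in `R`. -/
def IsEssentialLIdeal (I : Ideal R) : Prop := ∀ K : Ideal R, K ⊓ I = ⊥ → K = ⊥

/-- The left singular ideal `Z_l`. -/
def lSingular : Set R := {a | IsEssentialLIdeal R (lAnnI R {a})}

end MoreDefs

/-!
Let `J` be the Jacobson radical of `R` and `Z` its left singular ideal. Since `R` is left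
P-injective, `J = Z`. The hypothesis on complements makes `R / J` semisimple, and the right
noetherian condition makes `Z` nilpotent, so `R` is semiprimary and the Hopkins–Levitzki theorem
applies.

For semisimplicity, let `a ∉ Z`. Some nonzero complement left ideal `C` meets `l(a)` trivially,
and `C` is not contained in `J` because it is not small, so we can pick `c ∈ C` outside `J`. Then
`l(c a) = l(c)`, whence `c a R = c R` and `c = c a s` for some `s`. Modulo `J`, choosing `c` so
that `r(c a)` is maximal forces `c a` to be von Neumann regular. Thus every nonzero right ideal of
`R / J` contains a nonzero idempotent, and a right noetherian ring with this property is
semisimple.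

For nilpotency, let `l(Jⁿ) = l(Jⁿ⁺¹)` and suppose `Jⁿ ≠ 0`. Among the `x` with `x Jⁿ ≠ 0` take one
with `r(x)` maximal. As the elements of `J` have essential left annihilators, `x Jⁿ⁺¹ = 0`, which
is a contradiction.
-/

theorem mem_lAnnI_singleton {R : Type*} [Ring R] {a u : R} : u ∈ lAnnI R {a} ↔ u * a = 0 :=
  ⟨fun h => h a rfl, by rintro h _ rfl; exact h⟩

theorem lAnnI_singleton_le_mul {R : Type*} [Ring R] (a b : R) :
    lAnnI R {a} ≤ lAnnI R {a * b} := by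
  intro u hu
  rw [mem_lAnnI_singleton] at hu ⊢
  rw [← mul_assoc, hu, zero_mul]

theorem mem_lSingular_iff {R : Type*} [Ring R] {a : R} :
    a ∈ lSingular R ↔ ∀ b, (∀ u, u * b * a = 0 → u * b = 0) → b = 0 := by
  constructor
  · intro ha b hb
    refine Ideal.span_singleton_eq_bot.1 (ha (Ideal.span {b}) ((Submodule.eq_bot_iff _).2 ?_))
    rintro _ ⟨hx, hxa⟩
    obtain ⟨u, rfl⟩ := Ideal.mem_span_singleton'.1 hx
    exact hb u (mem_lAnnI_singleton.1 hxa)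
  · intro ha K hK
    refine (Submodule.eq_bot_iff _).2 fun b hb => ha b fun u hu => ?_
    exact (Submodule.eq_bot_iff _).1 hK _ ⟨K.mul_mem_left u hb, mem_lAnnI_singleton.2 hu⟩

theorem isUnit_of_sub_one_mem_jacobson {R : Type*} [Ring R] {r : R}
    (hr : r - 1 ∈ Ring.jacobson R) : IsUnit r := by
  have exists_left_inv : ∀ x : R, x - 1 ∈ Ring.jacobson R → ∃ y, y * x = 1 := by
    intro x hx
    rw [← Ideal.jacobson_bot] at hx
    obtain ⟨y, hy⟩ := Ideal.exists_mul_sub_mem_of_sub_one_mem_jacobson x hx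
    exact ⟨y, sub_eq_zero.1 hy⟩
  obtain ⟨s, hsr⟩ := exists_left_inv r hr
  have hs : s - 1 ∈ Ring.jacobson R := by
    have : s - 1 = -(s * (r - 1)) := by rw [mul_sub, hsr, mul_one, neg_sub]
    rw [this]
    exact neg_mem (Ideal.mul_mem_left _ s hr)
  obtain ⟨t, hts⟩ := exists_left_inv s hs
  have htr : t = r := left_inv_eq_right_inv hts hsr
  exact isUnit_iff_exists.2 ⟨s, htr ▸ hts, hsr⟩

theorem exists_isComplementLeftIdeal_ge {R : Type*} [Ring R] {A S : Ideal R} (h : A ⊓ S = ⊥) :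
    ∃ C, A ≤ C ∧ C ⊓ S = ⊥ ∧ IsComplementLeftIdeal R C := by
  have chain_bound : ∀ c ⊆ {C : Ideal R | C ⊓ S = ⊥}, IsChain (· ≤ ·) c → ∀ y ∈ c,
      ∃ ub ∈ {C : Ideal R | C ⊓ S = ⊥}, ∀ z ∈ c, z ≤ ub := by
    intro c hc hchain _ _
    refine ⟨sSup c, disjoint_iff.1 ?_, fun _ => le_sSup⟩
    exact hchain.directedOn.disjoint_sSup_left.2 fun b hb => disjoint_iff.2 (hc hb)
  obtain ⟨C, hAC, hC⟩ := zorn_le_nonempty₀ _ chain_bound A h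
  exact ⟨C, hAC, hC.prop, S, hC.prop, fun C' hCC' hC' => (hC.eq_of_le hC' hCC').symm⟩

section Noetherian

variable {Q : Type*} [Ring Q]

/-- The right annihilator `{r | I * r = 0}` of a two-sided ideal `I`, bundled as a left ideal, so
that the ascending chain condition on left ideals applies to it. -/
def rAnnIdeal (I : Ideal Q) [I.IsTwoSided] : Ideal Q where
  carrier := rAnn Q I
  add_mem' ha hb x hx := by rw [mul_add, ha x hx, hb x hx, add_zero]
  zero_mem' _ _ := mul_zero _
  smul_mem' c a ha x hx := by rw [smul_eq_mul, ← mul_assoc, ha _ (I.mul_mem_right c hx)]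

theorem rAnnIdeal_anti {I J : Ideal Q} [I.IsTwoSided] [J.IsTwoSided] (h : I ≤ J) :
    rAnnIdeal J ≤ rAnnIdeal I :=
  fun _ hr x hx => hr x (h hx)

theorem one_mem_rAnnIdeal_iff {I : Ideal Q} [I.IsTwoSided] : 1 ∈ rAnnIdeal I ↔ I = ⊥ := by
  rw [Submodule.eq_bot_iff]
  exact forall₂_congr fun x _ => by rw [mul_one]

theorem isCompl_span_singleton_one_sub {e : Q} (he : IsIdempotentElem e) :
    IsCompl (Ideal.span {e}) (Ideal.span {1 - e}) := by
  constructor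
  · rw [disjoint_iff, Submodule.eq_bot_iff]
    rintro x ⟨hx, hx'⟩
    obtain ⟨u, rfl⟩ := Ideal.mem_span_singleton'.1 hx
    obtain ⟨v, hv⟩ := Ideal.mem_span_singleton'.1 hx'
    calc u * e = u * e * e := by rw [mul_assoc, he.eq]
      _ = v * ((1 - e) * e) := by rw [← hv, mul_assoc]
      _ = 0 := by rw [he.one_sub_mul_self, mul_zero]
  · rw [codisjoint_iff, Ideal.eq_top_iff_one]
    have hsum := Submodule.add_mem_sup (Ideal.mem_span_singleton_self e)
      (Ideal.mem_span_singleton_self (1 - e))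
    rwa [add_sub_cancel] at hsum

theorem isIdempotentElem_add_one_sub_mul {e g : Q} (he : IsIdempotentElem e)
    (hg : IsIdempotentElem g) (hge : g * e = 0) : IsIdempotentElem (e + (1 - e) * g) := by
  have hgg : g * ((1 - e) * g) = g := by
    rw [← mul_assoc, mul_sub, mul_one, hge, sub_zero, hg.eq]
  have hf : IsIdempotentElem ((1 - e) * g) := by rw [IsIdempotentElem, mul_assoc, hgg]
  refine he.add hf ?_
  rw [← mul_assoc, he.mul_one_sub_self, zero_mul, mul_assoc, hge, mul_zero, add_zero]

theorem span_singleton_lt_span_singleton_add {e g : Q} (he : IsIdempotentElem e)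
    (hg : IsIdempotentElem g) (hge : g * e = 0) (hg0 : g ≠ 0) :
    Ideal.span {e} < Ideal.span {e + (1 - e) * g} := by
  refine SetLike.lt_iff_le_and_exists.2 ⟨?_, g, ?_, ?_⟩
  · rw [Ideal.span_singleton_le_iff_mem, Ideal.mem_span_singleton']
    exact ⟨e, by rw [mul_add, he.eq, ← mul_assoc, he.mul_one_sub_self, zero_mul, add_zero]⟩
  · refine Ideal.mem_span_singleton'.2 ⟨g, ?_⟩
    rw [mul_add, hge, zero_add, ← mul_assoc, mul_sub, mul_one, hge, sub_zero, hg.eq]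
  · intro hmem
    obtain ⟨u, rfl⟩ := Ideal.mem_span_singleton'.1 hmem
    exact hg0 (by rw [← hge, mul_assoc, he.eq])

variable [IsNoetherianRing Q]

theorem exists_isIdempotentElem_eq_span
    (hQ : ∀ a : Q, a ≠ 0 → ∃ b, b * a ≠ 0 ∧ IsIdempotentElem (b * a)) (I : Ideal Q) :
    ∃ e, IsIdempotentElem e ∧ I = Ideal.span {e} := by
  obtain ⟨e, ⟨he, heI⟩, hmax⟩ := exists_maximalFor_of_wellFoundedGT
    (fun e : Q => IsIdempotentElem e ∧ e ∈ I) (fun e => Ideal.span {e})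
    ⟨0, IsIdempotentElem.zero, I.zero_mem⟩
  refine ⟨e, he, le_antisymm (fun x hx => ?_) ((Ideal.span_singleton_le_iff_mem I).2 heI)⟩
  by_contra hxe
  have hx0 : x * (1 - e) ≠ 0 := by
    intro h
    rw [mul_sub, mul_one, sub_eq_zero] at h
    exact hxe (Ideal.mem_span_singleton'.2 ⟨x, h.symm⟩)
  obtain ⟨b, hg0, hg⟩ := hQ _ hx0
  obtain ⟨g, hgdef⟩ : ∃ g, g = b * (x * (1 - e)) := ⟨_, rfl⟩
  rw [← hgdef] at hg0 hg
  have hge : g * e = 0 := by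
    rw [hgdef, mul_assoc, mul_assoc, he.one_sub_mul_self, mul_zero, mul_zero]
  have hgI : g ∈ I := by
    rw [hgdef, mul_sub, mul_one]
    exact I.mul_mem_left b (I.sub_mem hx (I.mul_mem_left x heI))
  -- `e + g` need not be idempotent; `(1 - e) * g` is orthogonal to `e` on both sides.
  have hlt := span_singleton_lt_span_singleton_add he hg hge hg0
  refine hlt.not_ge (hmax ⟨isIdempotentElem_add_one_sub_mul he hg hge, ?_⟩ hlt.le)
  exact I.add_mem heI (I.mul_mem_left _ hgI)

theorem isSemisimpleRing_of_exists_isIdempotentElem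
    (hQ : ∀ a : Q, a ≠ 0 → ∃ b, b * a ≠ 0 ∧ IsIdempotentElem (b * a)) : IsSemisimpleRing Q := by
  refine (isSemisimpleModule_iff Q Q).2 ⟨fun I => ?_⟩
  obtain ⟨e, he, rfl⟩ := exists_isIdempotentElem_eq_span hQ I
  exact ⟨_, isCompl_span_singleton_one_sub he⟩

theorem exists_mul_mul_mul_mul_eq (hQ : ∀ a : Q, a ≠ 0 → ∃ c ≠ 0, ∃ s, s * a * c = c)
    {a : Q} (ha : a ≠ 0) : ∃ c s, a * c ≠ 0 ∧ a * c * s * (a * c) = a * c := by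
  obtain ⟨c, hac, hmax⟩ := exists_maximalFor_of_wellFoundedGT
    (fun c : Q => a * c ≠ 0) (fun c => lAnnI Q {a * c}) ⟨1, by rwa [mul_one]⟩
  obtain ⟨d, hd, s, hsd⟩ := hQ _ hac
  have hacd : a * (c * d) ≠ 0 := by
    intro h
    rw [mul_assoc, mul_assoc, h, mul_zero] at hsd
    exact hd hsd.symm
  have hle : lAnnI Q {a * (c * d)} ≤ lAnnI Q {a * c} :=
    hmax hacd (by simpa only [mul_assoc] using lAnnI_singleton_le_mul (a * c) d)
  have hmem : 1 - a * c * s ∈ lAnnI Q {a * (c * d)} := by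
    rw [mem_lAnnI_singleton, sub_mul, one_mul, sub_eq_zero, ← mul_assoc a c d, mul_assoc (a * c) s,
      ← mul_assoc s, hsd]
  have hmem' := mem_lAnnI_singleton.1 (hle hmem)
  rw [sub_mul, one_mul, sub_eq_zero] at hmem'
  exact ⟨c, s, hac, hmem'.symm⟩

theorem exists_mul_isIdempotentElem (hQ : ∀ a : Q, a ≠ 0 → ∃ c ≠ 0, ∃ s, s * a * c = c)
    {a : Q} (ha : a ≠ 0) : ∃ b, b * a ≠ 0 ∧ IsIdempotentElem (b * a) := by
  obtain ⟨c, s, hac, hreg⟩ := exists_mul_mul_mul_mul_eq hQ ha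
  refine ⟨c * s * a * c * s, fun h => hac ?_, ?_⟩
  · calc a * c = a * c * s * (a * c * s * (a * c)) := by rw [hreg, hreg]
      _ = a * (c * s * a * c * s * a) * c := by simp only [mul_assoc]
      _ = 0 := by rw [h, mul_zero, zero_mul]
  · calc c * s * a * c * s * a * (c * s * a * c * s * a)
        = c * s * (a * c * s * (a * c * s * (a * c))) * s * a := by simp only [mul_assoc]
      _ = c * s * (a * c) * s * a := by rw [hreg, hreg]
      _ = c * s * a * c * s * a := by simp only [mul_assoc]

end Noetherian

section LeftSingular

open MulOpposite

variable {R : Type*} [Ring R]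

theorem exists_isComplementLeftIdeal_inf_lAnnI_eq_bot {a : R} (ha : a ∉ lSingular R) :
    ∃ C, IsComplementLeftIdeal R C ∧ C ≠ ⊥ ∧ C ⊓ lAnnI R {a} = ⊥ := by
  obtain ⟨A, hAa, hA⟩ : ∃ A : Ideal R, A ⊓ lAnnI R {a} = ⊥ ∧ A ≠ ⊥ := by
    by_contra! h
    exact ha h
  obtain ⟨C, hAC, hCa, hC⟩ := exists_isComplementLeftIdeal_ge hAa
  exact ⟨C, hC, ne_bot_of_le_ne_bot hA hAC, hCa⟩

theorem exists_forall_mul_mul_eq_zero [IsNoetherianRing Rᵐᵒᵖ] {I N : Ideal Rᵐᵒᵖ}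
    [N.IsTwoSided] (hI : ∀ x ∈ I, unop x ∈ lSingular R) (hN : N ≠ ⊥) :
    ∃ r ∉ rAnnIdeal N, ∀ x ∈ I, ∀ y ∈ N, x * y * r = 0 := by
  obtain ⟨r, hr, hmax⟩ := exists_maximalFor_of_wellFoundedGT
    (fun r => r ∉ rAnnIdeal N) (fun r => lAnnI Rᵐᵒᵖ {r}) ⟨1, one_mem_rAnnIdeal_iff.not.2 hN⟩
  refine ⟨r, hr, fun x hx y hy => ?_⟩
  by_contra hxyr
  have hyr : unop (y * r) ≠ 0 := by
    intro h
    rw [mul_assoc, (unop_eq_zero_iff _).1 h, mul_zero] at hxyr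
    exact hxyr rfl
  obtain ⟨u, hux, hu⟩ : ∃ u, u * unop (y * r) * unop x = 0 ∧ u * unop (y * r) ≠ 0 := by
    by_contra! h
    exact hyr (mem_lSingular_iff.1 (hI x hx) _ h)
  have hru : r * op u ∉ rAnnIdeal N := by
    intro h
    refine hu (op_injective ?_)
    simpa only [op_mul, op_unop, op_zero, mul_assoc] using h y hy
  have hxy : x * y ∈ lAnnI Rᵐᵒᵖ {r * op u} := by
    rw [mem_lAnnI_singleton]
    refine unop_injective ?_
    simpa only [unop_mul, unop_op, unop_zero, mul_assoc] using hux
  exact hxyr (mem_lAnnI_singleton.1 (hmax hru (lAnnI_singleton_le_mul r _) hxy))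

theorem isNilpotent_of_unop_mem_lSingular [IsNoetherianRing Rᵐᵒᵖ] {I : Ideal Rᵐᵒᵖ}
    [I.IsTwoSided] (hI : ∀ x ∈ I, unop x ∈ lSingular R) : IsNilpotent I := by
  obtain ⟨n, hn⟩ := WellFoundedGT.monotone_chain_condition
    ⟨fun n => rAnnIdeal (I ^ n), fun _ _ h => rAnnIdeal_anti (Ideal.pow_le_pow_right h)⟩
  refine ⟨n, ?_⟩
  by_contra hpow
  obtain ⟨r, hr, hzero⟩ := exists_forall_mul_mul_eq_zero hI hpow
  have hle : I ^ (n + 1) ≤ lAnnI Rᵐᵒᵖ {r} := by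
    rw [Ideal.IsTwoSided.pow_succ, Ideal.mul_le]
    exact fun x hx y hy => mem_lAnnI_singleton.2 (hzero x hx y hy)
  refine hr ((hn (n + 1) n.le_succ).ge fun x hx => ?_)
  exact mem_lAnnI_singleton.1 (hle hx)

end LeftSingular

section PInjective

open MulOpposite

variable {R : Type*} [Ring R]

theorem IsLeftPInjective.op_mem_jacobson_iff (hP : IsLeftPInjective R) {x : R} :
    op x ∈ Ring.jacobson Rᵐᵒᵖ ↔ x ∈ lSingular R := by
  constructor
  · intro hx
    refine mem_lSingular_iff.2 fun b hb => ?_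
    obtain ⟨s, hs⟩ := (hP (b * x) b).1 fun u hu => hb u (by rwa [mul_assoc])
    have hunit : IsUnit (1 - x * s) := by
      refine isUnit_op.1 (isUnit_of_sub_one_mem_jacobson ?_)
      rw [op_sub, op_one, op_mul, sub_sub_cancel_left]
      exact neg_mem (Ideal.mul_mem_left _ _ hx)
    refine hunit.mul_left_eq_zero.1 ?_
    rw [mul_sub, mul_one, ← mul_assoc, ← hs, sub_self]
  · intro hx
    rw [← Ideal.jacobson_bot, Ideal.mem_jacobson_iff]
    intro y
    have hlAnn : ∀ u, u * (1 + x * unop y) = 0 → u = 0 := by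
      refine fun u hu => mem_lSingular_iff.1 hx u fun t ht => ?_
      calc t * u = t * (u * (1 + x * unop y)) - t * u * x * unop y := by noncomm_ring
        _ = 0 := by rw [hu, ht, mul_zero, zero_mul, sub_zero]
    obtain ⟨d, hd⟩ := (hP (1 + x * unop y) 1).1 fun u hu => by rw [hlAnn u hu, zero_mul]
    refine ⟨op d, ?_⟩
    rw [Submodule.mem_bot, sub_eq_zero]
    refine unop_injective ?_
    simp only [unop_add, unop_mul, unop_op, unop_one]
    rw [hd]
    noncomm_ring

theorem IsLeftPInjective.isSmallLeftIdeal (hP : IsLeftPInjective R) {C : Ideal R}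
    (hC : ∀ c ∈ C, c ∈ lSingular R) : IsSmallLeftIdeal R C := by
  intro K hK
  obtain ⟨k, hk, c, hc, hkc⟩ := Submodule.mem_sup.1 ((Ideal.eq_top_iff_one _).1 hK)
  refine Ideal.eq_top_of_isUnit_mem _ hk (isUnit_op.1 (isUnit_of_sub_one_mem_jacobson ?_))
  rw [← op_one, ← op_sub, ← hkc, sub_add_cancel_left, op_neg]
  exact neg_mem (hP.op_mem_jacobson_iff.2 (hC c hc))

theorem IsLeftPInjective.exists_mul_mul_eq_self (hP : IsLeftPInjective R)
    (hC : ∀ C : Ideal R, IsComplementLeftIdeal R C → C ≠ ⊥ → ¬ IsSmallLeftIdeal R C)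
    {a : R} (ha : a ∉ lSingular R) : ∃ c ∉ lSingular R, ∃ s, c * a * s = c := by
  obtain ⟨C, hCcompl, hC0, hCa⟩ := exists_isComplementLeftIdeal_inf_lAnnI_eq_bot ha
  obtain ⟨c, hcC, hc⟩ : ∃ c ∈ C, c ∉ lSingular R := by
    by_contra! h
    exact hC C hCcompl hC0 (hP.isSmallLeftIdeal h)
  obtain ⟨s, hs⟩ := (hP (c * a) c).1 fun u hu => (Submodule.eq_bot_iff _).1 hCa _
    ⟨C.mul_mem_left u hcC, mem_lAnnI_singleton.2 (by rwa [mul_assoc])⟩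
  exact ⟨c, hc, s, hs.symm⟩

variable [IsNoetherianRing Rᵐᵒᵖ]

theorem IsLeftPInjective.isNilpotent_jacobson (hP : IsLeftPInjective R) :
    IsNilpotent (Ring.jacobson Rᵐᵒᵖ) :=
  isNilpotent_of_unop_mem_lSingular fun _ => hP.op_mem_jacobson_iff.1

theorem IsLeftPInjective.isSemisimpleRing_quotient_jacobson (hP : IsLeftPInjective R)
    (hC : ∀ C : Ideal R, IsComplementLeftIdeal R C → C ≠ ⊥ → ¬ IsSmallLeftIdeal R C) :
    IsSemisimpleRing (Rᵐᵒᵖ ⧸ Ring.jacobson Rᵐᵒᵖ) := by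
  have : IsNoetherianRing (Rᵐᵒᵖ ⧸ Ring.jacobson Rᵐᵒᵖ) :=
    isNoetherianRing_of_surjective _ _ (Ideal.Quotient.mk _) Ideal.Quotient.mk_surjective
  have mk_eq_zero_iff (x : Rᵐᵒᵖ) :
      Ideal.Quotient.mk (Ring.jacobson Rᵐᵒᵖ) x = 0 ↔ unop x ∈ lSingular R := by
    rw [Ideal.Quotient.eq_zero_iff_mem, ← hP.op_mem_jacobson_iff, op_unop]
  refine isSemisimpleRing_of_exists_isIdempotentElem fun _ =>
    exists_mul_isIdempotentElem fun a ha => ?_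
  obtain ⟨x, rfl⟩ := Ideal.Quotient.mk_surjective a
  obtain ⟨c, hc, s, hcs⟩ := hP.exists_mul_mul_eq_self hC ((mk_eq_zero_iff x).not.1 ha)
  refine ⟨Ideal.Quotient.mk _ (op c), (mk_eq_zero_iff _).not.2 hc, Ideal.Quotient.mk _ (op s), ?_⟩
  rw [← map_mul, ← map_mul, mul_assoc]
  exact congrArg (fun y => Ideal.Quotient.mk _ (op y)) hcs

end PInjective

/-- If moreover every nonzero complement left ideal is not small, `R` is right artinian. -/
theorem stmt6 {R : Type*} [Ring R] [IsNoetherianRing Rᵐᵒᵖ] (hP : IsLeftPInjective R)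
    (hC : ∀ C : Ideal R, IsComplementLeftIdeal R C → C ≠ ⊥ → ¬ IsSmallLeftIdeal R C) :
    IsArtinianRing Rᵐᵒᵖ := by
  have : IsSemiprimaryRing Rᵐᵒᵖ :=
    ⟨hP.isSemisimpleRing_quotient_jacobson hC, hP.isNilpotent_jacobson⟩
  exact IsSemiprimaryRing.isNoetherian_iff_isArtinian.1 ‹_›
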